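/- arXiv:1902.05604 — 4 statements merged into one kernel-verified Lean document; each statement's English description precedes it below -/
import Mathlib

section
/- Let N = (P,T,F,Var) be a UDPN over a countably infinite data domain D and let i, f be ℚ⁺-markings. If f is ℚ⁺-reachable from i, then there exists a ℚ⁺-run ρ such that i →ρ_{ℚ⁺} f and |dval(ρ)| ≤ |dval(i) ∪ dval(f)| + 1 + maxvars(N). -/
open Finset

noncomputable section
open scoped Classical

/-- An unordered data Petri net over places `P`, transitions `T`, variables `V`,
with countably infinite data domain `D = ℕ`.
`pre p t` is the function `F(p,t) : V → ℕ` and `post t p` is `F(t,p) : V → ℕ`. -/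
structure UDPN (P T V : Type) where
  pre : P → T → V → ℕ
  post : T → P → V → ℕ

/-- An X-step `(c, t, π)`: coefficient, transition and mode. -/
structure Step (T V : Type) where
  c : ℚ
  t : T
  π : V → ℕ

variable {P T V : Type} [Fintype P] [Fintype T] [Fintype V]

/-- The `P × V` rational matrix `F(•,t)`. -/
def preMat (N : UDPN P T V) (t : T) (p : P) (x : V) : ℚ := (N.pre p t x : ℚ)

/-- The displacement `Δ(t) = F(t,•) − F(•,t)` as a `P × V` rational matrix. -/
def delta (N : UDPN P T V) (t : T) (p : P) (x : V) : ℚ :=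
  (N.post t p x : ℚ) - (N.pre p t x : ℚ)

/-- `A ∘ π⁻¹`: the `P × ℕ` matrix with `(A∘π⁻¹)(p,α) = A(p,x)` if `α = π x`,
and `0` if `α` is outside the range of `π`. (For injective `π` the sum has at
most one nonzero summand.) -/
def compInv (A : P → V → ℚ) (π : V → ℕ) (p : P) (α : ℕ) : ℚ :=
  ∑ x : V, if π x = α then A p x else 0

/-- Only finitely many nonzero columns. -/
def FinCols (m : P → ℕ → ℚ) : Prop := {α : ℕ | ∃ p, m p α ≠ 0}.Finite

/-- `IsMarking pos m`: `m` is an X-marking; `pos = true` corresponds to `X = ℚ⁺`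
(all entries nonnegative), `pos = false` to `X = ℚ`. -/
def IsMarking (pos : Bool) (m : P → ℕ → ℚ) : Prop :=
  FinCols m ∧ (pos = true → ∀ p α, 0 ≤ m p α)

/-- Data values of a marking. -/
def dvalM (m : P → ℕ → ℚ) : Set ℕ := {α | ∃ p, m p α ≠ 0}

/-- A valid X-step: nonnegative coefficient and injective mode.  -/
def IsStep (s : Step T V) : Prop := 0 ≤ s.c ∧ Function.Injective s.π

/-- A valid X-run: a finite sequence of X-steps. -/
def IsRun (ρ : List (Step T V)) : Prop := ∀ s ∈ ρ, IsStep s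

/-- The effect `c · (Δ(t) ∘ π⁻¹)` of a step. -/
def stepEffect (N : UDPN P T V) (s : Step T V) (p : P) (α : ℕ) : ℚ :=
  s.c * compInv (delta N s.t) s.π p α

/-- The effect `Δ(ρ)` of a run. -/
def runEffect (N : UDPN P T V) (ρ : List (Step T V)) (p : P) (α : ℕ) : ℚ :=
  (ρ.map fun s => stepEffect N s p α).sum

/-- A step `(c,t,π)` is fireable at `m` if `m − c·(F(•,t)∘π⁻¹)` is again an
X-marking: finitely many nonzero columns and (when `pos`) nonnegative entries. -/
def stepFireable (pos : Bool) (N : UDPN P T V) (m : P → ℕ → ℚ) (s : Step T V) : Prop :=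
  FinCols (fun p α => m p α - s.c * compInv (preMat N s.t) s.π p α) ∧
  (pos = true → ∀ p α, 0 ≤ m p α - s.c * compInv (preMat N s.t) s.π p α)

/-- A run is fireable at `m` if each step is fireable at the corresponding
intermediate marking. -/
def runFireable (pos : Bool) (N : UDPN P T V) : (P → ℕ → ℚ) → List (Step T V) → Prop
  | _, [] => True
  | m, s :: ρ => stepFireable pos N m s ∧
      runFireable pos N (fun p α => m p α + stepEffect N s p α) ρ

/-- `m →ρ_X m'` : `ρ` is fireable at `m` and `m' = m + Δ(ρ)`. -/
def Reaches (pos : Bool) (N : UDPN P T V) (i : P → ℕ → ℚ) (ρ : List (Step T V))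
    (f : P → ℕ → ℚ) : Prop :=
  runFireable pos N i ρ ∧ f = fun p α => i p α + runEffect N ρ p α

/-- `f` is X-reachable from `i`. -/
def Reach (pos : Bool) (N : UDPN P T V) (i f : P → ℕ → ℚ) : Prop :=
  ∃ ρ, IsRun ρ ∧ Reaches pos N i ρ f

/-- `vars(t)`. -/
def varsOf (N : UDPN P T V) (t : T) : Set V :=
  {x | ∃ p, N.pre p t x ≠ 0 ∨ N.post t p x ≠ 0}

/-- `maxvars(N) = max_{t ∈ T} |vars(t)|` (0 if `T` is empty). -/
def maxvars (N : UDPN P T V) : ℕ :=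
  Finset.univ.sup fun t : T => (varsOf N t).ncard

/-- `dval(ρ)`: the data values used by a run. -/
def runDval (N : UDPN P T V) (ρ : List (Step T V)) : Set ℕ :=
  {α | ∃ s ∈ ρ, ∃ x ∈ varsOf N s.t, s.π x = α}
/-- For `α ∈ E`: the least element of `{β ∈ E | β > α}` if nonempty, else `min E`. -/
def nextE (E : Finset ℕ) (α : ℕ) : ℕ :=
  if h : (E.filter fun β => α < β).Nonempty then (E.filter fun β => α < β).min' h
  else if h' : E.Nonempty then E.min' h' else 0

/-- The inverse of `nextE` on `E`: the greatest element of `{γ ∈ E | γ < β}` if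
nonempty, else `max E`. -/
def prevE (E : Finset ℕ) (β : ℕ) : ℕ :=
  if h : (E.filter fun γ => γ < β).Nonempty then (E.filter fun γ => γ < β).max' h
  else if h' : E.Nonempty then E.max' h' else 0

/-- The mode `π'` of `rot(E,ω)`, characterized by: the permutation matrix `P'` of
`π'` satisfies `P'(•,α) = P(•,α)` for `α ∉ E` and `P'(•,α) = P(•, nextE α)` for
`α ∈ E` (i.e. `π' x = α ↔ π x = nextE α` for `α ∈ E`). -/
def rotMode {V : Type} (E : Finset ℕ) (π : V → ℕ) (x : V) : ℕ :=
  if π x ∈ E then prevE E (π x) else π x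

/-- `rot(E,ω)`. -/
def rotStep (E : Finset ℕ) (s : Step T V) : Step T V := ⟨s.c, s.t, rotMode E s.π⟩

/-- The uniformization `U(E,ω)`: the concatenation
`rot^0(E, ω/|E|) ⋯ rot^{|E|−1}(E, ω/|E|)`. -/
def uniformize (E : Finset ℕ) (s : Step T V) : List (Step T V) :=
  (List.range E.card).map fun k => (rotStep E)^[k] ⟨s.c / (E.card : ℚ), s.t, s.π⟩

/-- Column `α` of `Δ(t)·P_π` is zero. -/
def zeroCol (N : UDPN P T V) (s : Step T V) (α : ℕ) : Prop :=
  ∀ p, compInv (delta N s.t) s.π p α = 0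

/-- The transposition of the data values `α` and `β`. -/
def swapVal (α β γ : ℕ) : ℕ := if γ = α then β else if γ = β then α else γ

/-- `R(α,E,ω)`: if column `α` of `Δ(t)·P_π` is zero then `ω` itself; otherwise the
step whose permutation matrix is obtained from `P_π` by exchanging columns `α` and
`β`, where `β` is the least datum in `E` whose column of `Δ(t)·P_π` is zero. -/
def replaceStep (N : UDPN P T V) (α : ℕ) (E : Finset ℕ) (s : Step T V) : Step T V :=
  if zeroCol N s α then s
  else if h : (E.filter fun β => zeroCol N s β).Nonempty then
    ⟨s.c, s.t, fun x => swapVal α ((E.filter fun β => zeroCol N s β).min' h) (s.π x)⟩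
  else s

/-- `dec(E,α,σ)`: the concatenation `U(E,R(α,E,σ(1))) ⋯ U(E,R(α,E,σ(n)))`. -/
def decRun (N : UDPN P T V) (α : ℕ) (E : Finset ℕ) (σ : List (Step T V)) :
    List (Step T V) :=
  σ.flatMap fun s => uniformize E (replaceStep N α E s)

/-- A histogram of order `q`: a `V × ℕ` matrix with nonnegative rational entries
and finitely many nonzero columns, every row summing to `q` and every column
summing to at most `q`. -/
def IsHistogram (H : V → ℕ → ℚ) (q : ℚ) : Prop :=
  0 ≤ q ∧ (∀ x α, 0 ≤ H x α) ∧ ({α | ∃ x, H x α ≠ 0}).Finite ∧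
  (∀ x, ∑ᶠ α, H x α = q) ∧ (∀ α, ∑ x : V, H x α ≤ q)

/-- `col(H)`: the nonzero columns of `H`. -/
def colH (H : V → ℕ → ℚ) : Set ℕ := {α | ∃ x, H x α ≠ 0}

/-- The permutation matrix `P_π` of a mode `π`. -/
def permMat {V : Type} (π : V → ℕ) (x : V) (α : ℕ) : ℚ := if π x = α then 1 else 0

/-- `Pre(ρ)`: pairs `(p,α)` of tokens consumed by the run `ρ`. -/
def preSet (N : UDPN P T V) (ρ : List (Step T V)) : Set (P × ℕ) :=
  {pa | ∃ s ∈ ρ, ∃ x, 0 < N.pre pa.1 s.t x ∧ s.π x = pa.2}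

/-- `Post(ρ)`: pairs `(p,α)` of tokens produced by the run `ρ`. -/
def postSet (N : UDPN P T V) (ρ : List (Step T V)) : Set (P × ℕ) :=
  {pa | ∃ s ∈ ρ, ∃ x, 0 < N.post s.t pa.1 x ∧ s.π x = pa.2}

/-- A loop-less UDPN: `PrePlace(t) ∩ PostPlace(t) = ∅` for every transition. -/
def IsLoopless (N : UDPN P T V) : Prop :=
  ∀ t : T, ¬ ∃ p : P, (∃ x, 0 < N.pre p t x) ∧ (∃ x, 0 < N.post t p x)

/-!
Let `S` be the set of data of `i` and `f`, let `k` bound the number of variables of every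
transition, and let `W` be a window of `k` fresh data. Consider the stochastic kernel `K` which fixes
the data in `S` and sends every other datum to a uniformly distributed element of `W`. Right
multiplication of markings by `K` is linear and monotone, and it fixes `i` and `f`. A step
`(c, t, π)` becomes the sequence of the `k` steps `(c / k, t, π_r)`, where `π_r` agrees with `π` on
the variables sent to `S` and places the others in `W`, cyclically rotated by `r`. The permutation
matrices of the `π_r` average to the product of that of `π` with `K`, so the effect and the total
consumption of these steps are those of `(c, t, π)` multiplied by `K`. As consumption and production
are both nonnegative, having the total consumption available at the outset makes all the steps
fireable.
-/

open Function
open scoped BigOperators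

/-! ### Existence of injections -/

lemma exists_injOn_of_ncard_le_card {α β : Type*} [Finite β] [Nonempty β] {s : Set α}
    (hs : s.Finite) (h : s.ncard ≤ Nat.card β) : ∃ f : α → β, Set.InjOn f s := by
  have hle : s.encard ≤ (Set.univ : Set β).encard := by
    rw [← hs.cast_ncard_eq, ← Set.finite_univ.cast_ncard_eq, Set.ncard_univ]
    exact_mod_cast h
  obtain ⟨f, -, hf⟩ := hs.exists_injOn_of_encard_le hle
  exact ⟨f, hf⟩

lemma exists_injective_disjoint_range {α β : Type*} [Finite α] [Infinite β] {s : Set β}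
    (hs : s.Finite) : ∃ f : α → β, Injective f ∧ Disjoint s (Set.range f) := by
  have hle : (Set.univ : Set α).encard ≤ sᶜ.encard := by
    rw [hs.infinite_compl.encard_eq]
    exact le_top
  obtain ⟨f, hfs, hf⟩ := Set.finite_univ.exists_injOn_of_encard_le hle
  refine ⟨f, Set.injOn_univ.mp hf, Set.disjoint_right.mpr ?_⟩
  rintro _ ⟨x, rfl⟩
  exact hfs (Set.mem_univ x)

lemma exists_injective_eqOn {α β : Type*} [Finite α] [Infinite β] {f : α → β} {s : Set α}
    (hf : Set.InjOn f s) : ∃ g : α → β, Injective g ∧ Set.EqOn g f s := by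
  obtain ⟨h, hh, hdisj⟩ := exists_injective_disjoint_range (α := α) (s.toFinite.image f)
  refine ⟨s.piecewise f h, (Set.injective_piecewise_iff _).mpr ⟨hf, hh.injOn, ?_⟩,
    s.piecewise_eqOn f h⟩
  exact fun x hx y _ => hdisj.ne_of_mem (Set.mem_image_of_mem f hx) (Set.mem_range_self y)

section
omit [Fintype P] [Fintype T] [Fintype V]

/-! ### Markings multiplied by a kernel on the data -/

lemma FinCols.add {m m' : P → ℕ → ℚ} (hm : FinCols m) (hm' : FinCols m') : FinCols (m + m') := by
  refine (hm.union hm').subset ?_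
  rintro α ⟨p, hp⟩
  by_contra! h
  simp only [Set.mem_union, Set.mem_ofPred_eq, not_or, not_exists, not_not] at h
  exact hp (by simp [h.1 p, h.2 p])

lemma FinCols.smul {m : P → ℕ → ℚ} (hm : FinCols m) (c : ℚ) : FinCols (c • m) :=
  hm.subset fun _ ⟨p, hp⟩ => ⟨p, right_ne_zero_of_mul hp⟩

/-- The matrix product `m · K` of a marking `m` with a matrix `K` over the data values. It is meant
for `m` with finitely many nonzero columns; otherwise the sum may take the junk value `0`. -/
def transport (K : ℕ → ℕ → ℚ) (m : P → ℕ → ℚ) (p : P) (β : ℕ) : ℚ :=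
  ∑ᶠ α, m p α * K α β

section Transport
variable {K : ℕ → ℕ → ℚ} {m m' : P → ℕ → ℚ}

lemma FinCols.hasFiniteSupport_mul (hm : FinCols m) (p : P) (k : ℕ → ℚ) :
    HasFiniteSupport fun α => m p α * k α :=
  hm.subset fun _ hα => ⟨p, left_ne_zero_of_mul hα⟩

lemma transport_add (hm : FinCols m) (hm' : FinCols m') :
    transport K (m + m') = transport K m + transport K m' := by
  ext p β
  simp only [transport, Pi.add_apply, add_mul]
  exact finsum_add_distrib (hm.hasFiniteSupport_mul p _) (hm'.hasFiniteSupport_mul p _)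

lemma transport_smul (c : ℚ) : transport K (c • m) = c • transport K m := by
  ext p β
  simp [transport, mul_finsum, mul_assoc]

lemma transport_mono (hK : 0 ≤ K) (hm : FinCols m) (hm' : FinCols m') (h : m ≤ m') :
    transport K m ≤ transport K m' := fun p β =>
  finsum_le_finsum' (hm.hasFiniteSupport_mul p _) (hm'.hasFiniteSupport_mul p _) fun α =>
    mul_le_mul_of_nonneg_right (h p α) (hK α β)

lemma FinCols.transport (hm : FinCols m) (hK : ∀ α, (support (K α)).Finite) :
    FinCols (transport K m) := by
  refine (hm.biUnion fun α _ => hK α).subset ?_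
  rintro β ⟨p, hp⟩
  obtain ⟨α, hα⟩ := not_forall.mp (mt finsum_eq_zero_of_forall_eq_zero hp)
  exact Set.mem_biUnion ⟨p, left_ne_zero_of_mul hα⟩ (right_ne_zero_of_mul hα)

lemma transport_eq_self (hK : ∀ α ∈ dvalM m, K α = permMat id α) : transport K m = m := by
  ext p β
  have hterm (α : ℕ) : m p α * K α β = m p α * permMat id α β := by
    by_cases hα : α ∈ dvalM m
    · rw [hK α hα]
    · rw [show m p α = 0 by simpa using fun h => hα ⟨p, h⟩, zero_mul, zero_mul]
  simp only [transport, hterm]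
  rw [finsum_eq_single _ β fun α hα => by simp [permMat, hα]]
  simp [permMat]

end Transport

/-! ### Families of modes averaging to a kernel -/

lemma permMat_nonneg (π : V → ℕ) (x : V) (α : ℕ) : 0 ≤ permMat π x α :=
  ite_nonneg zero_le_one le_rfl

/-- The family of modes `σ` averages to the kernel `K` along `π` on the variables in `W`: there, the
permutation matrices of the `σ r` have mean `P_π · K`. -/
def Averages {ι : Type*} [Fintype ι] (σ : ι → V → ℕ) (K : ℕ → ℕ → ℚ) (π : V → ℕ) (W : Set V) :
    Prop :=
  ∀ x ∈ W, ∀ β, 𝔼 r, permMat (σ r) x β = K (π x) β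

/-- The step `s` split into equal parts, one for each mode of the family `σ`. -/
def spread {ι : Type*} [Fintype ι] (σ : ι → V → ℕ) (s : Step T V) : List (Step T V) :=
  Finset.univ.toList.map fun r => ⟨s.c / Fintype.card ι, s.t, σ r⟩

section Averages
variable {ι : Type*} [Fintype ι] {σ : ι → V → ℕ} {K : ℕ → ℕ → ℚ} {π : V → ℕ} {W : Set V}
  {N : UDPN P T V} {s : Step T V}

lemma isRun_spread (hs : 0 ≤ s.c) (hσ : ∀ r, Injective (σ r)) : IsRun (spread σ s) := by
  intro u hu
  obtain ⟨r, -, rfl⟩ := List.mem_map.mp hu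
  exact ⟨div_nonneg hs (Nat.cast_nonneg _), hσ r⟩

lemma Averages.kernel_ne_zero (h : Averages σ K π W) {x : V} (hx : x ∈ W) (r : ι) :
    K (π x) (σ r x) ≠ 0 := by
  rw [← h x hx]
  refine (Finset.expect_pos' (fun q _ => permMat_nonneg _ _ _) ⟨r, Finset.mem_univ r, ?_⟩).ne'
  simp [permMat]

lemma Averages.runDval_spread_subset (h : Averages σ K s.π (varsOf N s.t)) :
    runDval N (spread σ s) ⊆ ⋃ α, support (K α) := by
  rintro _ ⟨u, hu, x, hx, rfl⟩
  obtain ⟨r, -, rfl⟩ := List.mem_map.mp hu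
  exact Set.mem_iUnion.mpr ⟨s.π x, h.kernel_ne_zero hx r⟩

end Averages

/-! ### Collapsing the data outside a set -/

/-- The stochastic kernel that fixes the data in `S` and sends every other datum to a uniformly
distributed element of the window `e g`, `g : G`. -/
def collapseKernel {G : Type} [Fintype G] (S : Set ℕ) (e : G → ℕ) (α β : ℕ) : ℚ :=
  if α ∈ S then permMat id α β else 𝔼 g, permMat e g β

section Collapse
variable {G : Type} [Fintype G] {S : Set ℕ} {e : G → ℕ}

lemma collapseKernel_nonneg (S : Set ℕ) (e : G → ℕ) : 0 ≤ collapseKernel S e :=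
  fun α _ => ite_nonneg (permMat_nonneg id α _)
    (Finset.expect_nonneg fun g _ => permMat_nonneg e g _)

lemma support_collapseKernel_subset (S : Set ℕ) (e : G → ℕ) (α : ℕ) :
    support (collapseKernel S e α) ⊆ (S ∩ {α}) ∪ Set.range e := by
  intro β hβ
  rw [mem_support, collapseKernel] at hβ
  split_ifs at hβ with hα
  · obtain rfl : α = β := (ite_ne_right_iff.mp hβ).1
    exact Or.inl ⟨hα, rfl⟩
  · obtain ⟨g, -, hg⟩ := Finset.exists_ne_zero_of_expect_ne_zero hβ
    exact Or.inr ⟨g, (ite_ne_right_iff.mp hg).1⟩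

lemma transport_collapseKernel_eq_self {m : P → ℕ → ℚ} (hm : dvalM m ⊆ S) :
    transport (collapseKernel S e) m = m :=
  transport_eq_self fun _ hα => funext fun _ => if_pos (hm hα)

lemma exists_averages_collapseKernel [Finite V] [AddGroup G]
    (he : Injective e) (hS : Disjoint S (Set.range e))
    {W : Set V} {ι : V → G} (hι : Set.InjOn ι W) {π : V → ℕ} (hπ : Injective π) :
    ∃ σ : G → V → ℕ, (∀ r, Injective (σ r)) ∧ Averages σ (collapseKernel S e) π W := by
  let rotated (r : G) (x : V) : ℕ := if π x ∈ S then π x else e (ι x + r)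
  have hrotated (r : G) : Set.InjOn (rotated r) W := by
    intro x hx y hy hxy
    simp only [rotated] at hxy
    split_ifs at hxy with hxS hyS hyS
    · exact hπ hxy
    · exact (hS.ne_of_mem hxS (Set.mem_range_self _) hxy).elim
    · exact (hS.ne_of_mem hyS (Set.mem_range_self _) hxy.symm).elim
    · exact hι hx hy (add_right_cancel (he hxy))
  choose σ hσ hσ_eq using fun r => exists_injective_eqOn (hrotated r)
  refine ⟨σ, hσ, fun x hx β => ?_⟩
  by_cases hxS : π x ∈ S
  · simp only [permMat, hσ_eq _ hx, rotated, collapseKernel, if_pos hxS, id]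
    exact Fintype.expect_const _
  · simp only [permMat, hσ_eq _ hx, rotated, collapseKernel, if_neg hxS]
    exact Fintype.expect_equiv (Equiv.addLeft (ι x)) _ _ fun _ => rfl

end Collapse

/-! ### Data of transitions and of runs -/

section
variable {N : UDPN P T V}

lemma preMat_nonneg (N : UDPN P T V) (t : T) : 0 ≤ preMat N t := fun _ _ => Nat.cast_nonneg _

lemma delta_add_preMat_nonneg (N : UDPN P T V) (t : T) : 0 ≤ delta N t + preMat N t :=
  fun p x => by simp [delta, preMat]

lemma runDval_append (ρ ρ' : List (Step T V)) :
    runDval N (ρ ++ ρ') = runDval N ρ ∪ runDval N ρ' := by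
  ext α
  simp [runDval, or_and_right, exists_or]

lemma runDval_eq_empty (h : ∀ t, varsOf N t = ∅) (ρ : List (Step T V)) : runDval N ρ = ∅ := by
  simp [runDval, h]

lemma preMat_eq_zero {t : T} {x : V} (hx : x ∉ varsOf N t) (p : P) : preMat N t p x = 0 := by
  simp_all [varsOf, preMat]

lemma delta_eq_zero {t : T} {x : V} (hx : x ∉ varsOf N t) (p : P) : delta N t p x = 0 := by
  simp_all [varsOf, delta]

end

end

section
omit [Fintype P] [Fintype T]

/-! ### Effect and consumption of steps -/

lemma compInv_eq_sum_mul_permMat (A : P → V → ℚ) (π : V → ℕ) (p : P) (α : ℕ) :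
    compInv A π p α = ∑ x, A p x * permMat π x α := by
  simp [compInv, permMat]

lemma compInv_add (A B : P → V → ℚ) (π : V → ℕ) :
    compInv (A + B) π = compInv A π + compInv B π := by
  ext p α
  simp [compInv_eq_sum_mul_permMat, add_mul, Finset.sum_add_distrib]

lemma compInv_nonneg {A : P → V → ℚ} (hA : 0 ≤ A) (π : V → ℕ) : 0 ≤ compInv A π :=
  fun p _ => Finset.sum_nonneg fun x _ => ite_nonneg (hA p x) le_rfl

lemma finCols_compInv (A : P → V → ℚ) (π : V → ℕ) : FinCols (compInv A π) := by
  refine (Set.finite_range π).subset ?_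
  rintro α ⟨p, hp⟩
  obtain ⟨x, -, hx⟩ := Finset.exists_ne_zero_of_sum_ne_zero hp
  exact ⟨x, (ite_ne_right_iff.mp hx).1⟩

lemma transport_compInv (K : ℕ → ℕ → ℚ) (A : P → V → ℚ) (π : V → ℕ) (p : P) (β : ℕ) :
    transport K (compInv A π) p β = ∑ x, A p x * K (π x) β := by
  have hterm (x : V) : A p x * K (π x) β = ∑ᶠ α, A p x * permMat π x α * K α β := by
    rw [finsum_eq_single _ (π x) fun α hα => by simp [permMat, hα.symm]]
    simp [permMat]
  simp only [hterm, transport, compInv_eq_sum_mul_permMat, Finset.sum_mul]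
  refine finsum_sum_comm _ _ fun x _ => (Set.finite_singleton (π x)).subset fun α hα => ?_
  by_contra h
  exact hα (by simp [permMat, Ne.symm h])

/-! ### Runs -/

/-- The total consumption `∑ c · (F(•,t) ∘ π⁻¹)` over the steps `(c, t, π)` of a run. -/
def runPre (N : UDPN P T V) (ρ : List (Step T V)) (p : P) (α : ℕ) : ℚ :=
  (ρ.map fun s => s.c * compInv (preMat N s.t) s.π p α).sum

section Runs
variable {pos : Bool} {N : UDPN P T V} {m m₁ m₂ : P → ℕ → ℚ} {s : Step T V}
  {ρ ρ' : List (Step T V)}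

lemma reaches_nil : Reaches pos N m [] m₁ ↔ m₁ = m := by
  simp [Reaches, runFireable, runEffect]

lemma reaches_cons : Reaches pos N m (s :: ρ) m₁ ↔
    stepFireable pos N m s ∧ Reaches pos N (m + stepEffect N s) ρ m₁ := by
  simp only [Reaches, runFireable, runEffect, List.map_cons, List.sum_cons, ← add_assoc, and_assoc]
  rfl

lemma Reaches.append (h : Reaches pos N m ρ m₁) (h' : Reaches pos N m₁ ρ' m₂) :
    Reaches pos N m (ρ ++ ρ') m₂ := by
  induction ρ generalizing m with
  | nil => rwa [reaches_nil.mp h] at h'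
  | cons s ρ ih =>
    obtain ⟨hs, hρ⟩ := reaches_cons.mp h
    exact reaches_cons.mpr ⟨hs, ih hρ⟩

lemma finCols_stepEffect (N : UDPN P T V) (s : Step T V) : FinCols (stepEffect N s) :=
  (finCols_compInv _ _).smul s.c

lemma Reaches.finCols (h : Reaches pos N m ρ m₁) (hm : FinCols m) : FinCols m₁ := by
  induction ρ generalizing m with
  | nil => rwa [reaches_nil.mp h]
  | cons s ρ ih => exact ih (reaches_cons.mp h).2 (hm.add (finCols_stepEffect N s))

lemma runPre_nonneg (hρ : IsRun ρ) : 0 ≤ runPre N ρ := by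
  refine fun p α => List.sum_nonneg fun q hq => ?_
  obtain ⟨s, hs, rfl⟩ := List.mem_map.mp hq
  exact mul_nonneg (hρ s hs).1 (compInv_nonneg (preMat_nonneg N s.t) _ p α)

lemma reaches_of_runPre_le (hρ : IsRun ρ) (hm : FinCols m) (h : runPre N ρ ≤ m) :
    Reaches true N m ρ (m + runEffect N ρ) := by
  induction ρ generalizing m with
  | nil => exact ⟨trivial, rfl⟩
  | cons s ρ ih =>
    obtain ⟨hs, hρ⟩ := List.forall_mem_cons.mp hρ
    have hle (p : P) (α : ℕ) :
        s.c * compInv (preMat N s.t) s.π p α + runPre N ρ p α ≤ m p α := h p α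
    have hprod (p : P) (α : ℕ) :
        0 ≤ stepEffect N s p α + s.c * compInv (preMat N s.t) s.π p α := by
      have := compInv_nonneg (delta_add_preMat_nonneg N s.t) s.π p α
      rw [compInv_add] at this
      rw [stepEffect, ← mul_add]
      exact mul_nonneg hs.1 this
    have hfire : stepFireable true N m s := by
      refine ⟨?_, fun _ p α => ?_⟩
      · have := hm.add ((finCols_compInv (preMat N s.t) s.π).smul (-s.c))
        rwa [neg_smul, ← sub_eq_add_neg] at this
      · have hnonneg : 0 ≤ runPre N ρ p α := runPre_nonneg hρ p α
        linarith [hle p α]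
    have hrest : runPre N ρ ≤ m + stepEffect N s := fun p α => by
      rw [Pi.add_apply, Pi.add_apply]
      linarith [hle p α, hprod p α]
    have := ih hρ (hm.add (finCols_stepEffect N s)) hrest
    rw [reaches_cons]
    refine ⟨hfire, ?_⟩
    convert this using 1
    ext p α
    simp [runEffect, add_assoc]

end Runs

/-! ### Runs multiplied by a kernel -/

section Averages
variable {ι : Type*} [Fintype ι] {σ : ι → V → ℕ} {K : ℕ → ℕ → ℚ} {π : V → ℕ} {W : Set V}
  {N : UDPN P T V} {m m' : P → ℕ → ℚ} {s : Step T V} {ρ : List (Step T V)}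

lemma sum_map_spread (σ : ι → V → ℕ) (s : Step T V) (A : T → P → V → ℚ) (p : P) (α : ℕ) :
    ((spread σ s).map fun u => u.c * compInv (A u.t) u.π p α).sum =
      s.c * 𝔼 r, compInv (A s.t) (σ r) p α := by
  rw [spread, List.map_map, Finset.sum_map_toList, Fintype.expect_eq_sum_div_card,
    ← mul_div_assoc, Finset.mul_sum, Finset.sum_div]
  exact Finset.sum_congr rfl fun _ _ => div_mul_eq_mul_div ..

namespace Averages

lemma expect_compInv (h : Averages σ K π W) {A : P → V → ℚ} (hA : ∀ x ∉ W, ∀ p, A p x = 0)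
    (p : P) (β : ℕ) : 𝔼 r, compInv A (σ r) p β = transport K (compInv A π) p β := by
  simp only [compInv_eq_sum_mul_permMat A (σ _), transport_compInv, Finset.expect_sum_comm,
    ← Finset.mul_expect]
  refine Finset.sum_congr rfl fun x _ => ?_
  by_cases hx : x ∈ W
  · rw [h x hx]
  · rw [hA x hx, zero_mul, zero_mul]

lemma runPre_spread (h : Averages σ K s.π (varsOf N s.t)) :
    runPre N (spread σ s) = transport K (s.c • compInv (preMat N s.t) s.π) := by
  ext p β
  rw [transport_smul, runPre, sum_map_spread σ s (preMat N),
    h.expect_compInv fun _ => preMat_eq_zero]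
  rfl

lemma runEffect_spread (h : Averages σ K s.π (varsOf N s.t)) :
    runEffect N (spread σ s) = transport K (stepEffect N s) := by
  ext p β
  change _ = transport K (s.c • compInv (delta N s.t) s.π) p β
  rw [transport_smul]
  exact (sum_map_spread σ s (delta N) p β).trans
    (congrArg _ (h.expect_compInv (fun _ => delta_eq_zero) p β))

lemma reaches_spread (h : Averages σ K s.π (varsOf N s.t)) (hσ : ∀ r, Injective (σ r))
    (hK : 0 ≤ K) (hKfin : ∀ α, (support (K α)).Finite) (hs : 0 ≤ s.c) (hm : FinCols m)
    (hfire : stepFireable true N m s) :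
    Reaches true N (transport K m) (spread σ s) (transport K (m + stepEffect N s)) := by
  have hpre : s.c • compInv (preMat N s.t) s.π ≤ m := fun p α =>
    sub_nonneg.mp (hfire.2 rfl p α)
  rw [transport_add hm (finCols_stepEffect N s), ← h.runEffect_spread]
  refine reaches_of_runPre_le (isRun_spread hs hσ) (hm.transport hKfin) ?_
  rw [h.runPre_spread]
  exact transport_mono hK ((finCols_compInv _ _).smul _) hm hpre

end Averages

lemma Reaches.exists_transport (hK : 0 ≤ K) (hKfin : ∀ α, (support (K α)).Finite)
    (havg : ∀ t π, Injective π →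
      ∃ σ : ι → V → ℕ, (∀ r, Injective (σ r)) ∧ Averages σ K π (varsOf N t))
    (h : Reaches true N m ρ m') (hρ : IsRun ρ) (hm : FinCols m) :
    ∃ ρ', IsRun ρ' ∧ Reaches true N (transport K m) ρ' (transport K m') ∧
      runDval N ρ' ⊆ ⋃ α, support (K α) := by
  induction ρ generalizing m with
  | nil =>
    refine ⟨[], hρ, ?_, ?_⟩
    · rw [reaches_nil.mp h, reaches_nil]
    · simp [runDval]
  | cons s ρ ih =>
    obtain ⟨hs, hρ⟩ := List.forall_mem_cons.mp hρ
    obtain ⟨hfire, hrest⟩ := reaches_cons.mp h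
    obtain ⟨σ, hσ, hsσ⟩ := havg s.t s.π hs.2
    obtain ⟨ρ', hρ', hreach, hdval⟩ := ih hrest hρ (hm.add (finCols_stepEffect N s))
    refine ⟨spread σ s ++ ρ', List.forall_mem_append.mpr ⟨isRun_spread hs.1 hσ, hρ'⟩,
      (hsσ.reaches_spread hσ hK hKfin hs.1 hm hfire).append hreach, ?_⟩
    rw [runDval_append]
    exact Set.union_subset hsσ.runDval_spread_subset hdval

end Averages

/-! ### The data bound -/

lemma Reach.exists_runDval_subset {G : Type} [AddGroup G] [Finite G] {e : G → ℕ}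
    {N : UDPN P T V} {i f : P → ℕ → ℚ} (h : Reach true N i f)
    (hi : FinCols i) (he : Injective e) (hdisj : Disjoint (dvalM i ∪ dvalM f) (Set.range e))
    (hN : ∀ t, ∃ ι : V → G, Set.InjOn ι (varsOf N t)) :
    ∃ ρ, IsRun ρ ∧ Reaches true N i ρ f ∧ runDval N ρ ⊆ dvalM i ∪ dvalM f ∪ Set.range e := by
  cases nonempty_fintype G
  obtain ⟨ρ, hρ, hreach⟩ := h
  have hsupp := support_collapseKernel_subset (dvalM i ∪ dvalM f) e
  have hfin (α : ℕ) : (support (collapseKernel (dvalM i ∪ dvalM f) e α)).Finite :=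
    (((Set.finite_singleton α).inter_of_right _).union (Set.finite_range e)).subset (hsupp α)
  obtain ⟨ρ', hρ', hreach', hdval⟩ := hreach.exists_transport (collapseKernel_nonneg _ e) hfin
    (fun t _ hπ => (hN t).elim fun _ hι => exists_averages_collapseKernel he hdisj hι hπ) hρ hi
  rw [transport_collapseKernel_eq_self Set.subset_union_left,
    transport_collapseKernel_eq_self Set.subset_union_right] at hreach'
  refine ⟨ρ', hρ', hreach', hdval.trans (Set.iUnion_subset fun α => (hsupp α).trans ?_)⟩
  exact Set.union_subset_union_left _ Set.inter_subset_left

theorem qplus_reach_data_bound_general {N : UDPN P T V} {i f : P → ℕ → ℚ} {k : ℕ}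
    (hk : ∀ t, (varsOf N t).ncard ≤ k) (hi : FinCols i) (hreach : Reach true N i f) :
    ∃ ρ : List (Step T V), IsRun ρ ∧ Reaches true N i ρ f ∧
      (runDval N ρ).ncard ≤ (dvalM i ∪ dvalM f).ncard + k := by
  obtain rfl | hpos := k.eq_zero_or_pos
  · obtain ⟨ρ, hρ, h⟩ := hreach
    have hvars (t : T) : varsOf N t = ∅ := (Set.ncard_eq_zero).mp (Nat.le_zero.mp (hk t))
    exact ⟨ρ, hρ, h, by simp [runDval_eq_empty hvars]⟩
  have : NeZero k := ⟨hpos.ne'⟩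
  have hS : (dvalM i ∪ dvalM f).Finite := by
    obtain ⟨ρ, -, h⟩ := hreach
    exact hi.union (h.finCols hi)
  have hN (t : T) : ∃ ι : V → ZMod k, Set.InjOn ι (varsOf N t) :=
    exists_injOn_of_ncard_le_card (varsOf N t).toFinite ((hk t).trans_eq (Nat.card_zmod k).symm)
  obtain ⟨e, he, hdisj⟩ := exists_injective_disjoint_range (α := ZMod k) hS
  obtain ⟨ρ, hρ, h, hdval⟩ := hreach.exists_runDval_subset hi he hdisj hN
  refine ⟨ρ, hρ, h, ?_⟩
  calc (runDval N ρ).ncard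
      ≤ (dvalM i ∪ dvalM f ∪ Set.range e).ncard :=
        Set.ncard_le_ncard hdval (hS.union (Set.finite_range e))
    _ ≤ (dvalM i ∪ dvalM f).ncard + (Set.range e).ncard := Set.ncard_union_le _ _
    _ = (dvalM i ∪ dvalM f).ncard + k := by simp [Set.ncard_range_of_injective he]

end

/-- If `f` is ℚ⁺-reachable from `i`, then there is a ℚ⁺-run `ρ`
with `i →ρ_{ℚ⁺} f` and `|dval(ρ)| ≤ |dval(i) ∪ dval(f)| + 1 + maxvars(N)`. -/
theorem qplus_reach_data_bound
    (N : UDPN P T V) (i f : P → ℕ → ℚ)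
    (hi : IsMarking true i) (hf : IsMarking true f)
    (hreach : Reach true N i f) :
    ∃ ρ : List (Step T V), IsRun ρ ∧ Reaches true N i ρ f ∧
      (runDval N ρ).ncard ≤ (dvalM i ∪ dvalM f).ncard + 1 + maxvars N := by
  obtain ⟨ρ, hρ, h, hcard⟩ := qplus_reach_data_bound_general (k := maxvars N)
    (fun t => Finset.le_sup (f := fun t => (varsOf N t).ncard) (Finset.mem_univ t)) hi.1 hreach
  exact ⟨ρ, hρ, h, hcard.trans (by lia)⟩
end
end

section
/- Let N = (P,T,F,Var) be a UDPN and i, f ℚ-markings. If there exists a ℚ-run σ such that i →σ_ℚ f and |dval(σ)| > |dval(i) ∪ dval(f)| + 1 + maxvars(N), then there exists a ℚ-run ρ such that i →ρ_ℚ f and |dval(ρ)| ≤ |dval(σ)| − 1. -/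
open Finset

noncomputable section
open scoped Classical

variable {P T V : Type} [Fintype P] [Fintype T] [Fintype V]

/-!
Over `ℚ` every run is fireable, so only the total effect of a run matters. Pick a data value `α`
of `σ` outside `dval(i) ∪ dval(f)`, and let `E` be the set of all other such values. A step
that uses `α` uses fewer than `maxvars(N)` values besides `α`, so some `β ∈ E` is free in it, and
exchanging `α` with `β` renames the step so as to avoid `α`. Renaming preserves the effect outside
`E ∪ {α}` and the sum of the columns over `E ∪ {α}`, which is zero because these columns agree in
`i` and `f`. Averaging the renamed run over all permutations of `E` replaces each column over `E`
by the mean of these columns, hence by zero, and so restores the effect of `σ`.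
-/

open scoped BigOperators

theorem expect_smul_eq_expect {G X M : Type*} [Group G] [Fintype G] [Fintype X] [MulAction G X]
    [MulAction.IsPretransitive G X] [AddCommMonoid M] [Module ℚ≥0 M] (f : X → M) (x : X) :
    𝔼 g : G, f (g • x) = 𝔼 y, f y := by
  have : Nonempty X := ⟨x⟩
  have orbit_mean_eq (y : X) : 𝔼 g : G, f (g • y) = 𝔼 g : G, f (g • x) := by
    obtain ⟨h, rfl⟩ := MulAction.exists_smul_eq G x y
    exact Fintype.expect_equiv (Equiv.mulRight h) _ _ fun g => by
      rw [Equiv.coe_mulRight, mul_smul]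
  calc 𝔼 g : G, f (g • x)
      = 𝔼 y, 𝔼 g : G, f (g • y) := by simp only [orbit_mean_eq, Fintype.expect_const]
    _ = 𝔼 g : G, 𝔼 y, f (g • y) := Finset.expect_comm _ _ _
    _ = 𝔼 _g : G, 𝔼 y, f y := Finset.expect_congr rfl fun g _ =>
        Fintype.expect_equiv (MulAction.toPerm g) _ _ fun _ => rfl
    _ = 𝔼 y, f y := Fintype.expect_const _

theorem exists_perm_image_subset_union_sdiff {X : Type*} {A : Set X} (hA : A.Finite)
    {E : Finset X} {a : X} (ha : a ∉ E) (hcard : A.ncard ≤ #E) :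
    ∃ e : Equiv.Perm X, {x | e x ≠ x} ⊆ insert a ↑E ∧ e '' A ⊆ (A ∪ E) \ {a} := by
  by_cases haA : a ∈ A
  · obtain ⟨b, hbE, hb⟩ : ∃ b ∈ (E : Set X), b ∉ A \ {a} :=
      Set.exists_mem_notMem_of_ncard_lt_ncard (by
        rw [Set.ncard_coe_finset]
        exact (Set.ncard_sdiff_singleton_lt_of_mem haA hA).trans_le hcard) hA.sdiff
    have hba : b ≠ a := fun h => ha (h ▸ hbE)
    refine ⟨Equiv.swap a b, fun x hx => ?_, ?_⟩
    · by_contra hxE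
      rw [Set.mem_insert_iff, not_or] at hxE
      exact hx (Equiv.swap_apply_of_ne_of_ne hxE.1 fun h => hxE.2 (h ▸ hbE))
    · rintro _ ⟨x, hxA, rfl⟩
      rcases eq_or_ne x a with rfl | hxa
      · rw [Equiv.swap_apply_left]
        exact ⟨Or.inr hbE, hba⟩
      · have hxb : x ≠ b := fun h => hb (h ▸ ⟨hxA, hxa⟩)
        rw [Equiv.swap_apply_of_ne_of_ne hxa hxb]
        exact ⟨Or.inl hxA, hxa⟩
  · exact ⟨1, fun x hx => (hx rfl).elim, by
      rintro _ ⟨x, hxA, rfl⟩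
      exact ⟨Or.inl hxA, fun h => haA (h ▸ hxA)⟩⟩

section Runs

omit [Fintype P] [Fintype T] [Fintype V]

/-- The data values that a step assigns to the variables of its transition. -/
def stepDval (N : UDPN P T V) (s : Step T V) : Set ℕ := s.π '' varsOf N s.t

theorem runDval_eq_biUnion (N : UDPN P T V) (ρ : List (Step T V)) :
    runDval N ρ = ⋃ s ∈ ρ, stepDval N s := by
  ext a
  simp [runDval, stepDval]

theorem stepDval_finite [Finite V] (N : UDPN P T V) (s : Step T V) : (stepDval N s).Finite :=
  (Set.toFinite (varsOf N s.t)).image s.π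

theorem runDval_finite [Finite V] (N : UDPN P T V) (ρ : List (Step T V)) :
    (runDval N ρ).Finite := by
  rw [runDval_eq_biUnion]
  exact ρ.finite_toSet.biUnion fun s _ => stepDval_finite N s

theorem ncard_stepDval_le_maxvars [Finite V] [Fintype T] (N : UDPN P T V) (s : Step T V) :
    (stepDval N s).ncard ≤ maxvars N :=
  (Set.ncard_image_le (Set.toFinite _)).trans
    (Finset.le_sup (f := fun t => (varsOf N t).ncard) (Finset.mem_univ s.t))

/-- The step with its coefficient multiplied by `c`. -/
def Step.scale (c : ℚ) (s : Step T V) : Step T V := ⟨c * s.c, s.t, s.π⟩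

/-- The step with its data values renamed along `e`. -/
def Step.rename (e : Equiv.Perm ℕ) (s : Step T V) : Step T V := ⟨s.c, s.t, e ∘ s.π⟩

theorem IsStep.scale {s : Step T V} (hs : IsStep s) {c : ℚ} (hc : 0 ≤ c) : IsStep (s.scale c) :=
  ⟨mul_nonneg hc hs.1, hs.2⟩

theorem IsStep.rename {s : Step T V} (hs : IsStep s) (e : Equiv.Perm ℕ) : IsStep (s.rename e) :=
  ⟨hs.1, e.injective.comp hs.2⟩

theorem stepDval_rename (N : UDPN P T V) (e : Equiv.Perm ℕ) (s : Step T V) :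
    stepDval N (s.rename e) = e '' stepDval N s :=
  Set.image_comp e s.π (varsOf N s.t)

/-- The run in which every step `s` of `σ` is renamed along its own permutation `e s`. -/
def renameSteps (e : Step T V → Equiv.Perm ℕ) (σ : List (Step T V)) : List (Step T V) :=
  σ.map fun s => s.rename (e s)

theorem IsRun.renameSteps {σ : List (Step T V)} (hσ : IsRun σ) (e : Step T V → Equiv.Perm ℕ) :
    IsRun (renameSteps e σ) :=
  List.forall_mem_map.mpr fun s hs => (hσ s hs).rename (e s)

theorem runDval_renameSteps (N : UDPN P T V) (e : Step T V → Equiv.Perm ℕ)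
    (σ : List (Step T V)) : runDval N (renameSteps e σ) = ⋃ s ∈ σ, e s '' stepDval N s := by
  ext a
  simp [runDval_eq_biUnion, renameSteps, stepDval_rename]

/-- The average of the renamings of `τ` along all permutations of `E`. It plays the role of the
uniformization `U(E, ·)`, with all permutations of `E` in place of the rotations. -/
def symmetrize (E : Finset ℕ) (τ : List (Step T V)) : List (Step T V) :=
  ((univ : Finset (Equiv.Perm E)).toList.flatMap fun g =>
    τ.map (Step.rename (Equiv.Perm.ofSubtype g))).map
      (Step.scale (Fintype.card (Equiv.Perm E) : ℚ)⁻¹)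

theorem mem_symmetrize {E : Finset ℕ} {τ : List (Step T V)} {s : Step T V} :
    s ∈ symmetrize E τ ↔ ∃ g : Equiv.Perm E, ∃ r ∈ τ,
      (r.rename (Equiv.Perm.ofSubtype g)).scale (Fintype.card (Equiv.Perm E) : ℚ)⁻¹ = s := by
  simp [symmetrize]

theorem IsRun.symmetrize {τ : List (Step T V)} (hτ : IsRun τ) (E : Finset ℕ) :
    IsRun (symmetrize E τ) := by
  intro s hs
  obtain ⟨g, r, hr, rfl⟩ := mem_symmetrize.mp hs
  exact ((hτ r hr).rename _).scale (by positivity)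

theorem runDval_symmetrize_subset (N : UDPN P T V) (E : Finset ℕ) (τ : List (Step T V)) :
    runDval N (symmetrize E τ) ⊆ runDval N τ ∪ E := by
  rintro _ ⟨s, hs, x, hx, rfl⟩
  obtain ⟨g, r, hr, rfl⟩ := mem_symmetrize.mp hs
  change Equiv.Perm.ofSubtype g (r.π x) ∈ runDval N τ ∪ E
  by_cases hE : r.π x ∈ E
  · rw [Equiv.Perm.ofSubtype_apply_of_mem g hE]
    exact Or.inr (g _).2
  · rw [Equiv.Perm.ofSubtype_apply_of_not_mem g hE]
    exact Or.inl ⟨r, hr, x, hx, rfl⟩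

theorem exists_renameSteps_avoiding [Finite V] [Fintype T] (N : UDPN P T V)
    {E : Finset ℕ} {α : ℕ} (hα : α ∉ E) (hE : maxvars N ≤ #E) (σ : List (Step T V)) :
    ∃ e : Step T V → Equiv.Perm ℕ, (∀ s, {a | e s a ≠ a} ⊆ ↑(insert α E)) ∧
      runDval N (renameSteps e σ) ⊆ (runDval N σ ∪ E) \ {α} := by
  choose e he himage using fun s : Step T V => exists_perm_image_subset_union_sdiff
    (stepDval_finite N s) hα ((ncard_stepDval_le_maxvars N s).trans hE)
  refine ⟨e, by simpa only [Finset.coe_insert] using he, ?_⟩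
  rw [runDval_renameSteps, runDval_eq_biUnion]
  refine Set.iUnion₂_subset fun s hs => (himage s).trans ?_
  gcongr
  exact Set.subset_biUnion_of_mem (u := fun s => stepDval N s) hs

variable [Fintype V]

theorem FinCols.add_mul_compInv {m : P → ℕ → ℚ} (hm : FinCols m) (c : ℚ) (A : P → V → ℚ)
    (π : V → ℕ) : FinCols fun p a => m p a + c * compInv A π p a := by
  refine (hm.union (Set.finite_range π)).subset fun a ⟨p, hp⟩ => ?_
  contrapose! hp
  simp only [Set.mem_union, Set.mem_ofPred_eq, Set.mem_range, not_or, not_exists, not_not] at hp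
  simp [compInv, hp.1 p, hp.2]

theorem runFireable_false (N : UDPN P T V) (ρ : List (Step T V)) {m : P → ℕ → ℚ}
    (hm : FinCols m) : runFireable false N m ρ := by
  induction ρ generalizing m with
  | nil => trivial
  | cons s ρ ih =>
    refine ⟨⟨?_, nofun⟩, ih (hm.add_mul_compInv _ _ _)⟩
    simpa only [sub_eq_add_neg, neg_mul] using hm.add_mul_compInv (-s.c) (preMat N s.t) s.π

theorem Reaches.of_runEffect_eq {N : UDPN P T V} {i f : P → ℕ → ℚ} {σ ρ : List (Step T V)}
    (hσ : Reaches false N i σ f) (hi : FinCols i) (h : runEffect N ρ = runEffect N σ) :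
    Reaches false N i ρ f :=
  ⟨runFireable_false N ρ hi, by rw [h]; exact hσ.2⟩

theorem Reaches.runEffect_eq_zero {N : UDPN P T V} {i f : P → ℕ → ℚ} {σ : List (Step T V)}
    {pos : Bool} (hσ : Reaches pos N i σ f) {a : ℕ} (ha : a ∉ dvalM i ∪ dvalM f) (p : P) :
    runEffect N σ p a = 0 := by
  simp only [dvalM, Set.mem_union, Set.mem_ofPred_eq, not_or, not_exists, not_not] at ha
  simpa only [ha.1 p, ha.2 p, zero_add] using (congrFun₂ hσ.2 p a).symm

theorem stepEffect_eq_zero_of_notMem_stepDval {N : UDPN P T V} {s : Step T V} {a : ℕ}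
    (ha : a ∉ stepDval N s) (p : P) : stepEffect N s p a = 0 := by
  rw [stepEffect, compInv, Finset.sum_eq_zero, mul_zero]
  intro x _
  refine ite_eq_right_iff.mpr fun hxa => ?_
  have hx : x ∉ varsOf N s.t := fun hx => ha ⟨x, hx, hxa⟩
  simp only [varsOf, Set.mem_ofPred_eq, not_exists, not_or, not_not] at hx
  simp [delta, hx p]

theorem runEffect_eq_zero_of_notMem_runDval {N : UDPN P T V} {ρ : List (Step T V)} {a : ℕ}
    (ha : a ∉ runDval N ρ) (p : P) : runEffect N ρ p a = 0 := by
  simp only [runDval_eq_biUnion, Set.mem_iUnion, not_exists] at ha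
  refine List.sum_eq_zero fun q hq => ?_
  obtain ⟨s, hs, rfl⟩ := List.mem_map.mp hq
  exact stepEffect_eq_zero_of_notMem_stepDval (ha s hs) p

theorem runEffect_flatMap {ι : Type*} (N : UDPN P T V) (l : List ι) (r : ι → List (Step T V))
    (p : P) (a : ℕ) :
    runEffect N (l.flatMap r) p a = (l.map fun k => runEffect N (r k) p a).sum := by
  simp only [runEffect, List.flatMap, List.map_flatten, List.map_map, List.sum_flatten,
    Function.comp_def]

theorem stepEffect_scale (N : UDPN P T V) (c : ℚ) (s : Step T V) (p : P) (a : ℕ) :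
    stepEffect N (s.scale c) p a = c * stepEffect N s p a :=
  mul_assoc _ _ _

theorem stepEffect_rename (N : UDPN P T V) (e : Equiv.Perm ℕ) (s : Step T V) (p : P) (a : ℕ) :
    stepEffect N (s.rename e) p a = stepEffect N s p (e⁻¹ a) := by
  simp only [stepEffect, compInv, Step.rename, Function.comp_apply, Equiv.Perm.eq_inv_iff_eq]
  congr!

theorem runEffect_map_scale (N : UDPN P T V) (c : ℚ) (ρ : List (Step T V)) (p : P) (a : ℕ) :
    runEffect N (ρ.map (Step.scale c)) p a = c * runEffect N ρ p a := by
  simp only [runEffect, List.map_map, Function.comp_def, stepEffect_scale, List.sum_map_mul_left]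

theorem runEffect_map_rename (N : UDPN P T V) (e : Equiv.Perm ℕ) (ρ : List (Step T V)) (p : P)
    (a : ℕ) : runEffect N (ρ.map (Step.rename e)) p a = runEffect N ρ p (e⁻¹ a) := by
  simp only [runEffect, List.map_map, Function.comp_def, stepEffect_rename]

theorem runEffect_renameSteps_of_notMem (N : UDPN P T V) {F : Finset ℕ}
    {e : Step T V → Equiv.Perm ℕ} (he : ∀ s, {a | e s a ≠ a} ⊆ F) (σ : List (Step T V)) (p : P)
    {a : ℕ} (ha : a ∉ F) : runEffect N (renameSteps e σ) p a = runEffect N σ p a := by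
  have inv_fixes (s : Step T V) : (e s)⁻¹ a = a :=
    Equiv.Perm.inv_eq_iff_eq.mpr (not_not.mp fun h => ha (he s (Ne.symm h)))
  simp only [runEffect, renameSteps, List.map_map, Function.comp_def, stepEffect_rename, inv_fixes]

theorem sum_runEffect_renameSteps (N : UDPN P T V) {F : Finset ℕ}
    {e : Step T V → Equiv.Perm ℕ} (he : ∀ s, {a | e s a ≠ a} ⊆ F) (σ : List (Step T V)) (p : P) :
    ∑ a ∈ F, runEffect N (renameSteps e σ) p a = ∑ a ∈ F, runEffect N σ p a := by
  have sum_step (s : Step T V) :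
      ∑ a ∈ F, stepEffect N (s.rename (e s)) p a = ∑ a ∈ F, stepEffect N s p a := by
    simp only [stepEffect_rename]
    exact Equiv.Perm.sum_comp _ F _ ((Equiv.Perm.set_support_symm_eq _).subset.trans (he s))
  induction σ with
  | nil => rfl
  | cons s σ ih =>
    simp only [runEffect, renameSteps, List.map_cons, List.sum_cons, Finset.sum_add_distrib,
      sum_step] at ih ⊢
    rw [ih]

theorem runEffect_symmetrize (N : UDPN P T V) (E : Finset ℕ) (τ : List (Step T V)) (p : P)
    (a : ℕ) :
    runEffect N (symmetrize E τ) p a =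
      𝔼 g : Equiv.Perm E, runEffect N τ p (Equiv.Perm.ofSubtype g⁻¹ a) := by
  simp only [symmetrize, runEffect_map_scale, runEffect_flatMap, runEffect_map_rename,
    Finset.sum_map_toList, Fintype.expect_eq_sum_div_card, map_inv, inv_mul_eq_div]

theorem runEffect_symmetrize_of_notMem (N : UDPN P T V) {E : Finset ℕ} (τ : List (Step T V))
    (p : P) {a : ℕ} (ha : a ∉ E) : runEffect N (symmetrize E τ) p a = runEffect N τ p a := by
  simp only [runEffect_symmetrize, Equiv.Perm.ofSubtype_apply_of_not_mem _ ha,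
    Fintype.expect_const]

theorem runEffect_symmetrize_of_mem (N : UDPN P T V) {E : Finset ℕ} (τ : List (Step T V))
    (p : P) {a : ℕ} (ha : a ∈ E) :
    runEffect N (symmetrize E τ) p a = (∑ b ∈ E, runEffect N τ p b) / #E := by
  calc runEffect N (symmetrize E τ) p a
      = 𝔼 g : Equiv.Perm E, runEffect N τ p (Equiv.Perm.ofSubtype g⁻¹ a) :=
        runEffect_symmetrize N E τ p a
    _ = 𝔼 g : Equiv.Perm E, runEffect N τ p (Equiv.Perm.ofSubtype g a) :=
        Fintype.expect_equiv (Equiv.inv _) _ _ fun _ => rfl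
    _ = 𝔼 g : Equiv.Perm E, runEffect N τ p (g • (⟨a, ha⟩ : E) : E) := by
        simp only [Equiv.Perm.ofSubtype_apply_of_mem _ ha, Equiv.Perm.smul_def]
    _ = 𝔼 b : E, runEffect N τ p b :=
        expect_smul_eq_expect (fun b : E => runEffect N τ p b) ⟨a, ha⟩
    _ = (∑ b ∈ E, runEffect N τ p b) / #E := by
        rw [Fintype.expect_eq_sum_div_card, Fintype.card_coe,
          Finset.sum_coe_sort E (runEffect N τ p)]

variable [Fintype T]

theorem exists_isRun_runEffect_eq_avoiding {N : UDPN P T V} {E : Finset ℕ} {α : ℕ} (hα : α ∉ E)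
    (hE : maxvars N ≤ #E) {σ : List (Step T V)} (hσ : IsRun σ)
    (hzero : ∀ a ∈ insert α E, ∀ p, runEffect N σ p a = 0) :
    ∃ ρ : List (Step T V), IsRun ρ ∧ runEffect N ρ = runEffect N σ ∧
      runDval N ρ ⊆ (runDval N σ ∪ E) \ {α} := by
  obtain ⟨e, he, hdval⟩ := exists_renameSteps_avoiding N hα hE σ
  set τ := renameSteps e σ
  have effect_α (p : P) : runEffect N τ p α = 0 :=
    runEffect_eq_zero_of_notMem_runDval (fun h => (hdval h).2 rfl) p
  have sum_E (p : P) : ∑ a ∈ E, runEffect N τ p a = 0 := by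
    calc ∑ a ∈ E, runEffect N τ p a
        = ∑ a ∈ insert α E, runEffect N τ p a := by
          rw [Finset.sum_insert hα, effect_α, zero_add]
      _ = ∑ a ∈ insert α E, runEffect N σ p a := sum_runEffect_renameSteps N he σ p
      _ = 0 := Finset.sum_eq_zero fun a ha => hzero a ha p
  refine ⟨symmetrize E τ, (hσ.renameSteps e).symmetrize E, ?_, ?_⟩
  · ext p a
    by_cases haE : a ∈ E
    · rw [runEffect_symmetrize_of_mem N τ p haE, sum_E, zero_div,
        hzero a (Finset.mem_insert_of_mem haE)]
    · rw [runEffect_symmetrize_of_notMem N τ p haE]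
      by_cases haα : a = α
      · rw [haα, effect_α, hzero α (Finset.mem_insert_self α E)]
      · exact runEffect_renameSteps_of_notMem N he σ p (by simp [haα, haE])
  · exact (runDval_symmetrize_subset N E τ).trans
      (Set.union_subset hdval fun a ha => ⟨Or.inr ha, fun h => hα (h ▸ ha)⟩)

theorem q_reach_decrease_general (N : UDPN P T V) (i f : P → ℕ → ℚ)
    (hi : IsMarking false i) (hf : IsMarking false f)
    (σ : List (Step T V)) (hσ : IsRun σ) (hσr : Reaches false N i σ f)
    (hbig : (dvalM i ∪ dvalM f).ncard + maxvars N < (runDval N σ).ncard) :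
    ∃ ρ : List (Step T V), IsRun ρ ∧ Reaches false N i ρ f ∧ runDval N ρ ⊂ runDval N σ := by
  obtain ⟨U, hU⟩ : ∃ U : Finset ℕ, (U : Set ℕ) = runDval N σ \ (dvalM i ∪ dvalM f) :=
    (runDval_finite N σ).sdiff.exists_finset_coe
  have mem_U {a : ℕ} (ha : a ∈ U) : a ∈ runDval N σ \ (dvalM i ∪ dvalM f) :=
    hU.subset (Finset.mem_coe.mpr ha)
  have maxvars_lt : maxvars N < #U := by
    have := Set.le_ncard_sdiff (dvalM i ∪ dvalM f) (runDval N σ) (hi.1.union hf.1)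
    rw [← Set.ncard_coe_finset, hU]
    lia
  obtain ⟨α, hαU⟩ : U.Nonempty := Finset.card_pos.mp (by lia)
  have maxvars_le : maxvars N ≤ #(U.erase α) := by
    rw [Finset.card_erase_of_mem hαU]
    lia
  obtain ⟨ρ, hρ, heffect, hdval⟩ := exists_isRun_runEffect_eq_avoiding
    (Finset.notMem_erase α U) maxvars_le hσ (by
      rw [Finset.insert_erase hαU]
      exact fun a ha => hσr.runEffect_eq_zero (mem_U ha).2)
  refine ⟨ρ, hρ, hσr.of_runEffect_eq hi.1 heffect, ?_⟩
  calc runDval N ρ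
      ⊆ (runDval N σ ∪ (U.erase α : Finset ℕ)) \ {α} := hdval
    _ ⊆ runDval N σ \ {α} := Set.sdiff_subset_sdiff_left
        (Set.union_subset subset_rfl fun a ha => (mem_U (Finset.mem_of_mem_erase ha)).1)
    _ ⊂ runDval N σ := Set.sdiff_singleton_ssubset.mpr (mem_U hαU).1

end Runs

/-- If there is a ℚ-run `σ` with `i →σ_ℚ f` using more than
`|dval(i) ∪ dval(f)| + 1 + maxvars(N)` data values, then there is a ℚ-run `ρ`
with `i →ρ_ℚ f` and `|dval(ρ)| ≤ |dval(σ)| − 1`. -/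
theorem q_reach_decrease
    (N : UDPN P T V) (i f : P → ℕ → ℚ)
    (hi : IsMarking false i) (hf : IsMarking false f)
    (σ : List (Step T V)) (hσ : IsRun σ) (hσr : Reaches false N i σ f)
    (hbig : (dvalM i ∪ dvalM f).ncard + 1 + maxvars N < (runDval N σ).ncard) :
    ∃ ρ : List (Step T V), IsRun ρ ∧ Reaches false N i ρ f ∧
      (runDval N ρ).ncard ≤ (runDval N σ).ncard - 1 := by
  obtain ⟨ρ, hρ, hρr, hlt⟩ := q_reach_decrease_general N i f hi hf σ hσ hσr (by lia)
  exact ⟨ρ, hρ, hρr, Nat.le_sub_one_of_lt (Set.ncard_lt_ncard hlt (runDval_finite N σ))⟩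
end
end

section
/- Let N = (P,T,F,Var) be a UDPN, E ⊂ D a nonempty finite set of data values, and ω = (c,t,π) a ℚ⁺-step that is fireable at a ℚ⁺-marking i, with f the ℚ⁺-marking obtained by firing ω at i. Let i', f' be ℚ-markings with f' = i' + Δ(U(E,ω)). Then: (1) for every α ∈ dval(ω) \ E, f'(•,α) − i'(•,α) = f(•,α) − i(•,α); and (2) for every α ∈ E, f'(•,α) − i'(•,α) = (1/|E|)·Σ_{β∈E} (f(•,β) − i(•,β)). -/
open Finset

noncomputable section
open scoped Classical

variable {P T V : Type} [Fintype P] [Fintype T] [Fintype V]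

/-!
Let `σ` be the permutation of the data domain that moves each element of `E` to the next one,
cyclically, and fixes everything else. Rotating a step precomposes its effect with `σ`, so the
effect of `U(E,ω)` at `α` is the average of the effects of `ω` along `α, σ α, …, σ ^ (|E| - 1) α`.
As `σ` is a single cycle on `E`, this orbit segment runs through `E` exactly once when `α ∈ E`;
it is constant when `α ∉ E`.
-/

section Cycle

open Equiv

lemma sum_range_pow_apply_of_isCycleOn {α M : Type*} [AddCommMonoid M] {σ : Perm α} {s : Finset α}
    (hσ : σ.IsCycleOn s) {a : α} (ha : a ∈ s) (g : α → M) :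
    ∑ k ∈ range #s, g ((σ ^ k) a) = ∑ b ∈ s, g b := by
  refine sum_nbij (fun k => (σ ^ k) a) (fun k _ => ?_) (fun k hk l hl hkl => ?_) (fun b hb => ?_)
    (fun _ _ => rfl)
  · exact (hσ.1.perm_pow k).mapsTo ha
  · exact ((hσ.pow_apply_eq_pow_apply ha).1 hkl).eq_of_lt_of_lt (mem_range.1 hk) (mem_range.1 hl)
  · obtain ⟨k, hk, rfl⟩ := hσ.exists_pow_eq ha hb
    exact ⟨k, mem_coe.2 (mem_range.2 hk), rfl⟩

lemma isCycleOn_finRotate : ∀ n : ℕ, (finRotate n).IsCycleOn Set.univ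
  | 0 => Perm.isCycleOn_of_subsingleton _ _
  | 1 => Perm.isCycleOn_of_subsingleton _ _
  | n + 2 => by
    have moves_all : {i | finRotate (n + 2) i ≠ i} = Set.univ :=
      Set.eq_univ_of_forall fun i => Perm.mem_support.1 (support_finRotate ▸ mem_univ i)
    exact moves_all ▸ isCycle_finRotate.isCycleOn

lemma covBy_finRotate_or_isMax {n : ℕ} (i : Fin n) :
    i ⋖ finRotate n i ∨ IsMax i ∧ IsMin (finRotate n i) := by
  obtain _ | n := n
  · exact i.elim0
  induction i using Fin.lastCases with
  | last => exact .inr ⟨isMax_top, finRotate_last ▸ isMin_bot⟩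
  | cast i =>
    left
    rw [finRotate_apply, Fin.coeSucc_eq_succ, Fin.covBy_iff]
    exact Order.covBy_add_one (i : ℕ)

variable {α : Type*} [LinearOrder α]

/-- The permutation that sends each element of `E` to its successor in `E`, the maximum of `E` to
its minimum, and fixes every point outside `E`: on `E` it is the paper's `next_E`. Transporting
`finRotate` along the increasing enumeration of `E` makes bijectivity automatic. -/
def cyclicSucc (E : Finset α) : Perm α :=
  (finRotate #E).extendDomain (E.orderIsoOfFin rfl).toEquiv

lemma cyclicSucc_orderIsoOfFin (E : Finset α) (i : Fin #E) :
    cyclicSucc E (E.orderIsoOfFin rfl i) = E.orderIsoOfFin rfl (finRotate #E i) :=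
  Perm.extendDomain_apply_image _ (E.orderIsoOfFin rfl).toEquiv i

lemma cyclicSucc_of_notMem {E : Finset α} {a : α} (ha : a ∉ E) : cyclicSucc E a = a :=
  Perm.extendDomain_apply_not_subtype _ _ ha

lemma isCycleOn_cyclicSucc (E : Finset α) : (cyclicSucc E).IsCycleOn E := by
  have h := (isCycleOn_finRotate #E).extendDomain (E.orderIsoOfFin rfl).toEquiv
  rwa [Set.image_univ, EquivLike.range_comp, Subtype.range_coe] at h

end Cycle

section PrevE

variable {E : Finset ℕ}

lemma prevE_of_covBy {α β : E} (h : α ⋖ β) : prevE E β = α := by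
  have hα : (α : ℕ) ∈ E.filter (· < (β : ℕ)) := mem_filter.2 ⟨α.2, h.lt⟩
  rw [prevE, dif_pos ⟨_, hα⟩]
  refine le_antisymm (max'_le _ _ _ fun γ hγ => ?_) (le_max' _ _ hα)
  obtain ⟨hγE, hγβ⟩ := mem_filter.1 hγ
  exact h.le_of_lt (c := ⟨γ, hγE⟩) hγβ

lemma prevE_of_isMin_of_isMax {α β : E} (hβ : IsMin β) (hα : IsMax α) : prevE E β = α := by
  have no_smaller : ¬ (E.filter (· < (β : ℕ))).Nonempty := by
    rintro ⟨γ, hγ⟩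
    obtain ⟨hγE, hγβ⟩ := mem_filter.1 hγ
    exact hγβ.not_ge (hβ.isBot ⟨γ, hγE⟩)
  rw [prevE, dif_neg no_smaller, dif_pos ⟨_, α.2⟩]
  exact le_antisymm (max'_le _ _ _ fun γ hγ => hα.isTop ⟨γ, hγ⟩) (le_max' _ _ α.2)

lemma prevE_cyclicSucc {α : ℕ} (hα : α ∈ E) : prevE E (cyclicSucc E α) = α := by
  let e := E.orderIsoOfFin rfl
  obtain ⟨i, hi⟩ := e.surjective ⟨α, hα⟩
  obtain rfl : (e i : ℕ) = α := congrArg Subtype.val hi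
  rw [cyclicSucc_orderIsoOfFin]
  obtain h | ⟨hi_max, hi_min⟩ := covBy_finRotate_or_isMax i
  · exact prevE_of_covBy ((apply_covBy_apply_iff e).2 h)
  · exact prevE_of_isMin_of_isMax (e.isMin_apply.2 hi_min) (e.isMax_apply.2 hi_max)

lemma rotMode_eq_cyclicSucc_symm_comp {V : Type} (π : V → ℕ) :
    rotMode E π = (cyclicSucc E).symm ∘ π := by
  funext x
  obtain ⟨α, hα⟩ := (cyclicSucc E).surjective (π x)
  rw [Function.comp_apply, rotMode, ← hα, Equiv.symm_apply_apply]
  split_ifs with h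
  · exact prevE_cyclicSucc ((isCycleOn_cyclicSucc E).apply_mem_iff.1 h)
  · exact cyclicSucc_of_notMem fun hαE => h ((isCycleOn_cyclicSucc E).apply_mem_iff.2 hαE)

end PrevE

section Effect

variable {P T V : Type} [Fintype V]

lemma compInv_symm_comp (A : P → V → ℚ) (σ : Equiv.Perm ℕ) (π : V → ℕ) (p : P) (α : ℕ) :
    compInv A (σ.symm ∘ π) p α = compInv A π p (σ α) := by
  simp only [compInv, Function.comp_apply, Equiv.symm_apply_eq]

variable (N : UDPN P T V) (E : Finset ℕ) (s : Step T V) (p : P) (α : ℕ)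

lemma stepEffect_rotStep :
    stepEffect N (rotStep E s) p α = stepEffect N s p (cyclicSucc E α) := by
  simp only [stepEffect, rotStep, rotMode_eq_cyclicSucc_symm_comp, compInv_symm_comp]

lemma stepEffect_rotStep_iterate (k : ℕ) :
    stepEffect N ((rotStep E)^[k] s) p α = stepEffect N s p ((cyclicSucc E ^ k) α) := by
  induction k generalizing s with
  | zero => rfl
  | succ k ih =>
    rw [Function.iterate_succ_apply, ih, stepEffect_rotStep, pow_succ', Equiv.Perm.mul_apply]

lemma runEffect_uniformize :
    runEffect N (uniformize E s) p α =
      (∑ k ∈ range #E, stepEffect N s p ((cyclicSucc E ^ k) α)) / #E := by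
  have stepEffect_div (β : ℕ) :
      stepEffect N ⟨s.c / #E, s.t, s.π⟩ p β = stepEffect N s p β / #E := div_mul_eq_mul_div _ _ _
  rw [sum_div, runEffect, uniformize, List.map_map, ← List.toFinset_range,
    List.sum_toFinset _ List.nodup_range]
  simp only [Function.comp_def, stepEffect_rotStep_iterate, stepEffect_div]

variable {E α}

lemma runEffect_uniformize_of_notMem (hE : E.Nonempty) (hα : α ∉ E) :
    runEffect N (uniformize E s) p α = stepEffect N s p α := by
  have fixed (k : ℕ) : (cyclicSucc E ^ k) α = α :=
    Equiv.Perm.pow_apply_eq_self_of_apply_eq_self (cyclicSucc_of_notMem hα) k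
  have hcard : (#E : ℚ) ≠ 0 := Nat.cast_ne_zero.2 hE.card_ne_zero
  simp only [runEffect_uniformize, fixed, sum_const, card_range, nsmul_eq_mul]
  exact mul_div_cancel_left₀ _ hcard

lemma runEffect_uniformize_of_mem (hα : α ∈ E) :
    runEffect N (uniformize E s) p α = (∑ β ∈ E, stepEffect N s p β) / #E := by
  rw [runEffect_uniformize, sum_range_pow_apply_of_isCycleOn (isCycleOn_cyclicSucc E) hα]

theorem uniformize_effect_general (hE : E.Nonempty) (i f : P → ℕ → ℚ)
    (hf : f = fun p α => i p α + stepEffect N s p α)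
    (i' f' : P → ℕ → ℚ)
    (hf' : f' = fun p α => i' p α + runEffect N (uniformize E s) p α) :
    (∀ α ∉ E, ∀ p : P, f' p α - i' p α = f p α - i p α) ∧
    (∀ α ∈ E, ∀ p : P, f' p α - i' p α = (∑ β ∈ E, (f p β - i p β)) / (#E : ℚ)) := by
  subst hf hf'
  simp only [add_sub_cancel_left]
  exact ⟨fun α hα p => runEffect_uniformize_of_notMem N s p hE hα,
    fun α hα p => runEffect_uniformize_of_mem N s p hα⟩

end Effect

/-- Effect of the uniformize operator `U(E,ω)` on the various
data values: outside `E` (but in `dval(ω)`) the effect is unchanged, on `E` the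
total effect is split uniformly. -/
theorem uniformize_effect
    (N : UDPN P T V) (E : Finset ℕ) (hE : E.Nonempty)
    (s : Step T V) (hs : IsStep s)
    (i f : P → ℕ → ℚ) (hi : IsMarking true i)
    (hfire : stepFireable true N i s)
    (hf : f = fun p α => i p α + stepEffect N s p α)
    (i' f' : P → ℕ → ℚ) (hi' : IsMarking false i') (hf'm : IsMarking false f')
    (hf' : f' = fun p α => i' p α + runEffect N (uniformize E s) p α) :
    (∀ α ∈ runDval N [s] \ (↑E : Set ℕ), ∀ p : P,
        f' p α - i' p α = f p α - i p α) ∧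
    (∀ α ∈ E, ∀ p : P,
        f' p α - i' p α = (∑ β ∈ E, (f p β - i p β)) / (E.card : ℚ)) :=
  have h := uniformize_effect_general N s hE i f hf i' f' hf'
  ⟨fun α hα => h.1 α hα.2, h.2⟩
end
end

section
/- Let Var be a finite set and D a countably infinite set. Every histogram H (over Var × D) of order q can be decomposed as a finite sum H = H_1 + ⋯ + H_m where each H_i is an [a_i]-histogram and a_1 + ⋯ + a_m = q. -/
open Finset

noncomputable section
open scoped Classical

variable {P T V : Type} [Fintype P] [Fintype T] [Fintype V]

/-- An `[a]`-histogram: a histogram of order `a > 0` all of whose entries lie in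
`{0, a}`. -/
def IsConstHistogram (H : V → ℕ → ℚ) (a : ℚ) : Prop :=
  0 < a ∧ IsHistogram H a ∧ ∀ x α, H x α = 0 ∨ H x α = a

/-!
Divide by `q`, so that rows sum to `1` and columns to at most `1`, and keep only the finitely many
nonzero columns. The resulting rectangular matrix `M` is the upper right block of the doubly
stochastic matrix with blocks `0`, `M`, `Mᵀ` and a diagonal matrix absorbing the column deficits.
By Birkhoff's theorem that matrix is a convex combination of permutation matrices. The zero block
forces each permutation of positive weight to send every row index of `M` to a column index of `M`,
so each upper right block is the matrix of an injection.
-/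

section Birkhoff

variable {m n K : Type*} [DecidableEq n]

/-- The 0-1 matrix of an injection `f`, whose row `x` has its one in column `f x`. These are the
permutation matrices `P_π` of the modes `π`, over any coefficients and any set of data values. -/
def embMatrix (K : Type*) [Zero K] [One K] (f : m ↪ n) : Matrix m n K :=
  Matrix.of fun x α => if f x = α then 1 else 0

lemma embMatrix_apply [Zero K] [One K] (f : m ↪ n) (x : m) (α : n) :
    embMatrix K f x α = if f x = α then 1 else 0 :=
  rfl

lemma embMatrix_mul {l : Type*} [Fintype n] [NonAssocSemiring K] (f : m ↪ n) (N : Matrix n l K) :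
    embMatrix K f * N = N.submatrix f id := by
  ext x α
  simp [Matrix.mul_apply, embMatrix_apply]

lemma embMatrix_mul_embMatrix {l : Type*} [Fintype n] [DecidableEq l] [NonAssocSemiring K]
    (f : m ↪ n) (g : n ↪ l) : embMatrix K f * embMatrix K g = embMatrix K (f.trans g) :=
  embMatrix_mul f (embMatrix K g)

lemma finsum_embMatrix_apply [AddCommMonoidWithOne K] (f : m ↪ n) (x : m) :
    ∑ᶠ α, embMatrix K f x α = 1 := by
  simp only [embMatrix_apply]
  rw [finsum_eq_single _ (f x) fun α hα => if_neg hα.symm, if_pos rfl]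

lemma sum_embMatrix_apply_le_one [Fintype m] [Semiring K] [PartialOrder K] [IsOrderedRing K]
    (f : m ↪ n) (α : n) : ∑ x, embMatrix K f x α ≤ 1 := by
  simp only [embMatrix_apply, sum_boole]
  have hcard : #{x | f x = α} ≤ 1 := by
    simp only [card_le_one, mem_filter_univ]
    exact fun x hx y hy => f.injective (hx.trans hy.symm)
  exact_mod_cast Nat.mono_cast (α := K) hcard

lemma submatrix_mul_embMatrix {l : Type*} [Fintype l] [NonAssocSemiring K] {M : Matrix m n K}
    {g : l ↪ n} (hg : ∀ x, ∀ α ∉ Set.range g, M x α = 0) :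
    M.submatrix id g * embMatrix K g = M := by
  ext x α
  by_cases hα : α ∈ Set.range g
  · obtain ⟨y, rfl⟩ := hα
    simp [Matrix.mul_apply, embMatrix_apply]
  · have hne (y : l) : g y ≠ α := fun h => hα ⟨y, h⟩
    simp [Matrix.mul_apply, embMatrix_apply, hne, hg x α hα]

lemma exists_embMatrix_eq_toBlocks₁₂_permMatrix [DecidableEq m] [Zero K] [One K]
    {σ : Equiv.Perm (m ⊕ n)} (hσ : ∀ x y, σ (Sum.inl x) ≠ Sum.inl y) :
    ∃ f : m ↪ n, embMatrix K f = (σ.permMatrix K).toBlocks₁₂ := by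
  have hinr (x : m) : ∃ α, σ (Sum.inl x) = Sum.inr α := by
    rcases h : σ (Sum.inl x) with y | α
    · exact absurd h (hσ x y)
    · exact ⟨α, rfl⟩
  choose f hf using hinr
  have hf_inj : Function.Injective f := fun x y hxy =>
    Sum.inl_injective (σ.injective (by rw [hf, hf, hxy]))
  refine ⟨⟨f, hf_inj⟩, ?_⟩
  ext x α
  simp [embMatrix_apply, Matrix.toBlocks₁₂, PEquiv.toMatrix_apply, hf]

lemma apply_ne_of_sum_smul_permMatrix_apply_eq_zero [Fintype n] [Semiring K] [PartialOrder K]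
    [IsOrderedRing K] {w : Equiv.Perm n → K} (hw : ∀ σ, 0 ≤ w σ) {i j : n}
    (h : (∑ σ, w σ • σ.permMatrix K) i j = 0) {σ : Equiv.Perm n} (hσ : w σ ≠ 0) : σ i ≠ j := by
  intro hij
  have hterm (τ : Equiv.Perm n) : (w τ • τ.permMatrix K) i j = if τ i = j then w τ else 0 := by
    simp [PEquiv.toMatrix_apply]
  simp only [Matrix.sum_apply, hterm] at h
  rw [sum_eq_zero_iff_of_nonneg fun τ _ => ite_nonneg (hw τ) le_rfl] at h
  exact hσ (by simpa only [if_pos hij] using h σ (mem_univ σ))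

lemma fromBlocks_transpose_diagonal_mem_doublyStochastic [Fintype m] [DecidableEq m] [Fintype n]
    [Ring K] [PartialOrder K] [IsOrderedRing K] {M : Matrix m n K} (hM : ∀ x α, 0 ≤ M x α)
    (hrow : ∀ x, ∑ α, M x α = 1) (hcol : ∀ α, ∑ x, M x α ≤ 1) :
    Matrix.fromBlocks 0 M M.transpose (Matrix.diagonal fun α => 1 - ∑ x, M x α) ∈
      doublyStochastic K (m ⊕ n) := by
  rw [mem_doublyStochastic_iff_sum]
  refine ⟨?_, ?_, ?_⟩
  · rintro (x | α) (y | β)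
    · exact le_rfl
    · exact hM x β
    · exact hM y α
    · rw [Matrix.fromBlocks_apply₂₂, Matrix.diagonal_apply]
      exact ite_nonneg (sub_nonneg.2 (hcol α)) le_rfl
  · rintro (x | α) <;> simp [hrow, Matrix.diagonal_apply]
  · rintro (x | α) <;> simp [hrow, Matrix.diagonal_apply]

variable [Field K] [LinearOrder K] [IsStrictOrderedRing K]

lemma mem_convexHull_range_embMatrix_of_fintype [Fintype m] [Fintype n] {M : Matrix m n K}
    (hM : ∀ x α, 0 ≤ M x α) (hrow : ∀ x, ∑ α, M x α = 1) (hcol : ∀ α, ∑ x, M x α ≤ 1) :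
    M ∈ convexHull K (Set.range (embMatrix K : (m ↪ n) → Matrix m n K)) := by
  obtain ⟨w, hw, hw_sum, hw_eq⟩ := exists_eq_sum_perm_of_mem_doublyStochastic
    (fromBlocks_transpose_diagonal_mem_doublyStochastic hM hrow hcol)
  have hblock : ∑ σ, w σ • (σ.permMatrix K).toBlocks₁₂ = M := by
    rw [← Matrix.toBlocks_fromBlocks₁₂ 0 M M.transpose, ← hw_eq]
    ext x α
    simp only [Matrix.sum_apply, Matrix.smul_apply, Matrix.toBlocks₁₂, Matrix.of_apply]
  have hinj (σ : Equiv.Perm (m ⊕ n)) (hσ : w σ ≠ 0) :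
      (σ.permMatrix K).toBlocks₁₂ ∈ Set.range (embMatrix K : (m ↪ n) → Matrix m n K) :=
    exists_embMatrix_eq_toBlocks₁₂_permMatrix fun x y =>
      apply_ne_of_sum_smul_permMatrix_apply_eq_zero hw (by rw [hw_eq]; rfl) hσ
  rw [← hblock, ← finsum_eq_sum_of_fintype]
  exact (convex_convexHull K _).finsum_mem hw (by rwa [finsum_eq_sum_of_fintype])
    fun σ hσ => subset_convexHull K _ (hinj σ hσ)

lemma mem_convexHull_range_embMatrix [Fintype m] {M : Matrix m n K} (hM : ∀ x α, 0 ≤ M x α)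
    (hfin : {α | ∃ x, M x α ≠ 0}.Finite) (hrow : ∀ x, ∑ᶠ α, M x α = 1)
    (hcol : ∀ α, ∑ x, M x α ≤ 1) :
    M ∈ convexHull K (Set.range (embMatrix K : (m ↪ n) → Matrix m n K)) := by
  set S := hfin.toFinset
  have hS (x : m) (α : n) (hα : α ∉ S) : M x α = 0 :=
    by_contra fun h => hα (hfin.mem_toFinset.2 ⟨x, h⟩)
  have hrowS (x : m) : ∑ s : S, M x s = 1 := by
    rw [S.sum_coe_sort (M x), ← hrow x, finsum_eq_sum_of_support_subset]
    exact fun α hα => by_contra fun h => hα (hS x α h)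
  let ι : S ↪ n := Function.Embedding.subtype (· ∈ S)
  have hN : M.submatrix id ι ∈
      convexHull K (Set.range (embMatrix K : (m ↪ S) → Matrix m S K)) :=
    mem_convexHull_range_embMatrix_of_fintype (fun x s => hM x s) hrowS fun s => hcol s
  have hNι : M.submatrix id ι * embMatrix K ι = M :=
    submatrix_mul_embMatrix fun x α hα => hS x α fun h => hα ⟨⟨α, h⟩, rfl⟩
  have hM_image := Set.mem_image_of_mem (mulRightLinearMap m K (embMatrix K ι)) hN
  rw [LinearMap.image_convexHull, mulRightLinearMap_apply, hNι] at hM_image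
  refine convexHull_mono ?_ hM_image
  rintro _ ⟨_, ⟨f, rfl⟩, rfl⟩
  exact ⟨f.trans ι, (embMatrix_mul_embMatrix f ι).symm⟩

theorem histogram_decomposition_general [Fintype m] {M : Matrix m n K} {q : K} (hq : 0 ≤ q)
    (hM : ∀ x α, 0 ≤ M x α) (hfin : {α | ∃ x, M x α ≠ 0}.Finite)
    (hrow : ∀ x, ∑ᶠ α, M x α = q) (hcol : ∀ α, ∑ x, M x α ≤ q) :
    ∃ (k : ℕ) (f : Fin k → m ↪ n) (a : Fin k → K),
      (∀ i, 0 < a i) ∧ ∑ i, a i = q ∧ M = ∑ i, a i • embMatrix K (f i) := by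
  rcases hq.eq_or_lt with rfl | hq
  · refine ⟨0, Fin.elim0, Fin.elim0, fun i => i.elim0, rfl, ?_⟩
    ext x α
    have hle : M x α ≤ ∑ y, M y α := single_le_sum (fun y _ => hM y α) (mem_univ x)
    simpa using (hle.trans (hcol α)).antisymm (hM x α)
  · have hmem : q⁻¹ • M ∈ convexHull K (Set.range (embMatrix K : (m ↪ n) → Matrix m n K)) := by
      refine mem_convexHull_range_embMatrix (fun x α => mul_nonneg (inv_nonneg.2 hq.le) (hM x α))
        (hfin.subset fun α ⟨x, hx⟩ => ⟨x, right_ne_zero_of_mul hx⟩) (fun x => ?_) fun α => ?_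
      · simp only [Matrix.smul_apply]
        rw [← smul_finsum, hrow, smul_eq_mul, inv_mul_cancel₀ hq.ne']
      · simp only [Matrix.smul_apply, smul_eq_mul]
        rw [← mul_sum, inv_mul_le_one₀ hq]
        exact hcol α
    obtain ⟨ι, _, z, w, hz, -, hw, hw_sum, hw_eq⟩ := eq_pos_convex_span_of_mem_convexHull hmem
    choose f hf using fun i => hz (Set.mem_range_self i)
    let e := (Fintype.equivFin ι).symm
    refine ⟨_, f ∘ e, fun i => q * w (e i), fun i => mul_pos hq (hw _), ?_, ?_⟩
    · rw [← mul_sum, e.sum_comp w, hw_sum, mul_one]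
    · simp only [Function.comp_apply, hf, mul_smul]
      rw [← smul_sum, e.sum_comp fun i => w i • z i, hw_eq, smul_inv_smul₀ hq.ne']

end Birkhoff

lemma isConstHistogram_smul_embMatrix (f : V ↪ ℕ) {a : ℚ} (ha : 0 < a) :
    IsConstHistogram (a • embMatrix ℚ f) a := by
  have hentry (x : V) (α : ℕ) : (a • embMatrix ℚ f) x α = 0 ∨ (a • embMatrix ℚ f) x α = a := by
    by_cases h : f x = α <;> simp [embMatrix_apply, h]
  refine ⟨ha, ⟨ha.le, fun x α => ?_, ?_, fun x => ?_, fun α => ?_⟩, hentry⟩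
  · rcases hentry x α with h | h <;> simp only [h, le_refl, ha.le]
  · refine (Set.finite_range f).subset fun α ⟨x, hx⟩ => ⟨x, by_contra fun h => hx ?_⟩
    simp [embMatrix_apply, h]
  · simp only [Matrix.smul_apply]
    rw [← smul_finsum, finsum_embMatrix_apply, smul_eq_mul, mul_one]
  · simp only [Matrix.smul_apply, smul_eq_mul]
    rw [← mul_sum]
    exact mul_le_of_le_one_right ha.le (sum_embMatrix_apply_le_one f α)

/-- Every histogram of order `q` decomposes as a finite sum of
`[a_k]`-histograms with `Σ a_k = q`. -/
theorem histogram_decomposition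
    (H : V → ℕ → ℚ) (q : ℚ) (hH : IsHistogram H q) :
    ∃ (m : ℕ) (Hs : Fin m → V → ℕ → ℚ) (a : Fin m → ℚ),
      (∀ k, IsConstHistogram (Hs k) (a k)) ∧ (∑ k, a k) = q ∧
      H = fun x α => ∑ k, Hs k x α := by
  obtain ⟨hq, hnonneg, hfin, hrow, hcol⟩ := hH
  obtain ⟨m, f, a, ha, ha_sum, rfl⟩ := histogram_decomposition_general hq hnonneg hfin hrow hcol
  refine ⟨m, fun k => a k • embMatrix ℚ (f k), a,
    fun k => isConstHistogram_smul_embMatrix (f k) (ha k), ha_sum, ?_⟩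
  funext x α
  exact Matrix.sum_apply x α _ _
end
end
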